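/- arXiv:2105.06359 — 3 statements merged into one kernel-verified Lean document; each statement's English description precedes it below -/
import Mathlib

section
/- Let N ≥ 1, let φ: ℝ^{N+1} → [0,∞) be a surface tension of class C² on ℝ^{N+1}\{0}, and let ψ: ℝ^{N+1} → [0,∞) be continuous with ψ(p) > 0 for p ≠ 0. Let f: ℝ × (0,∞) → ℝ be such that f(·,t) is ℤ-periodic for every t, let u(x,t) := f(x·e₁, t), and assume u is of class C² on ℝ^N × (0,∞) and is a classical solution of the anisotropic graphical flow ∂_t u + ψ(−∇u,1)·A_φ[u] = 0. Then for every t > 0 the map t ↦ ∫_{[0,1]^N} φ(−∇u(x,t),1) dx is differentiable and d/dt ∫_{[0,1]^N} φ(−∇u(x,t),1) dx = −∫_{[0,1]^N} (∂_t u(x,t))² / ψ(−∇u(x,t),1) dx. -/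
/-!
Since `u(x,t) = f(x·e₁,t)`, the problem is one-dimensional. Put `Φ(c) = φ(-c e₁, 1)`, which is C²
because `(-c e₁, 1)` never vanishes (`normalVec_ne_zero`). The energy is then `∫₀¹ Φ(∂ᵣf) dr`
(`setIntegral_unitCube`), and the anisotropic mean curvature is `-∂ᵣ(Φ'(∂ᵣf))`
(`Aop_comp_coord`), so the flow reads `∂ₜf = ψ · ∂ᵣ(Φ'(∂ᵣf))`.

Differentiating under the integral, exchanging the mixed derivatives of `f` and integrating by
parts gives `d/dt ∫₀¹ Φ(∂ᵣf) = ∫₀¹ Φ'(∂ᵣf) ∂ᵣ∂ₜf = -∫₀¹ ∂ᵣ(Φ'(∂ᵣf)) ∂ₜf`, with boundary terms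
cancelling by periodicity (`hasDerivAt_energy`); the flow equation turns the integrand into
`(∂ₜf)² / ψ`.
-/


noncomputable section

/-- Append the value `1` as last coordinate: `aug N p = (p, 1) ∈ ℝ^{N+1}`. -/
def aug (N : ℕ) (p : EuclideanSpace ℝ (Fin N)) : EuclideanSpace ℝ (Fin (N + 1)) :=
  (WithLp.equiv 2 (Fin (N + 1) → ℝ)).symm
    (Fin.snoc ((WithLp.equiv 2 (Fin N → ℝ)) p) (1 : ℝ))

/-- The anisotropic mean curvature operator of the graph of `u`:
`A_φ[u](x) = div (∇ₓφ(-∇u(x), 1))`, i.e. the divergence of the vector field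
whose `i`-th component is the `i`-th partial derivative of `φ` at `(-∇u(x), 1)`. -/
def Aop (N : ℕ) (φ : EuclideanSpace ℝ (Fin (N + 1)) → ℝ)
    (u : EuclideanSpace ℝ (Fin N) → ℝ) (x : EuclideanSpace ℝ (Fin N)) : ℝ :=
  ∑ i : Fin N,
    fderiv ℝ (fun y : EuclideanSpace ℝ (Fin N) =>
      gradient φ (aug N (-(gradient u y))) (Fin.castSucc i)) x (EuclideanSpace.single i 1)

/-- `φ` is a surface tension: nonnegative, convex, positively 1-homogeneous and
positive away from the origin. -/
def IsSurfaceTension (N : ℕ) (φ : EuclideanSpace ℝ (Fin (N + 1)) → ℝ) : Prop :=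
  ConvexOn ℝ Set.univ φ ∧ (∀ p, 0 ≤ φ p) ∧
    (∀ l : ℝ, 0 < l → ∀ p, φ (l • p) = l * φ p) ∧ (∀ p, p ≠ 0 → 0 < φ p)

/-- `u : ℝ^N × I → ℝ` is a classical solution of the anisotropic graphical flow
`∂ₜ u + ψ(-∇u, 1) · A_φ[u] = 0`: it is C² in space, C¹ in time, and satisfies the
equation pointwise. -/
def IsFlowSol (N : ℕ) (φ ψ : EuclideanSpace ℝ (Fin (N + 1)) → ℝ)
    (u : EuclideanSpace ℝ (Fin N) → ℝ → ℝ) (I : Set ℝ) : Prop :=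
  (∀ t ∈ I, ContDiff ℝ 2 (fun x => u x t)) ∧
  (∀ x, ContDiffOn ℝ 1 (fun s => u x s) I) ∧
  (∀ x, ∀ t ∈ I,
    deriv (fun s => u x s) t
      + ψ (aug N (-(gradient (fun y => u y t) x))) * Aop N φ (fun y => u y t) x = 0)

/-- The unit cube `[0,1]^N` in `ℝ^N`. -/
def unitCube (N : ℕ) : Set (EuclideanSpace ℝ (Fin N)) :=
  {x | ∀ i, x i ∈ Set.Icc (0 : ℝ) 1}

open MeasureTheory Set Filter Topology

/-! ### The one-dimensional energy identity -/

/-- The energy identity in one space variable, before the flow equation is used: the energy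
`∫₀¹ Φ(∂ᵣF)` of an `r`-periodic `F` has `t`-derivative `-∫₀¹ (Φ'(∂ᵣF))' ∂ₜF`. The boundary terms
of the integration by parts cancel by periodicity. -/
lemma hasDerivAt_energy (F : ℝ × ℝ → ℝ) (hF : ContDiffOn ℝ 2 F (univ ×ˢ Ioi 0))
    (hper : ∀ r t, F (r + 1, t) = F (r, t)) (Φ : ℝ → ℝ) (hΦ : ContDiff ℝ 2 Φ)
    (t : ℝ) (ht : 0 < t) :
    HasDerivAt (fun s => ∫ r in (0 : ℝ)..1, Φ (fderiv ℝ F (r, s) (1, 0)))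
      (-∫ r in (0 : ℝ)..1, deriv (fun r => deriv Φ (fderiv ℝ F (r, t) (1, 0))) r *
        fderiv ℝ F (r, t) (0, 1)) t := by
  have hU : IsOpen ((univ : Set ℝ) ×ˢ Ioi (0 : ℝ)) := isOpen_univ.prod isOpen_Ioi
  have hD : ContDiffOn ℝ 1 (fderiv ℝ F) (univ ×ˢ Ioi 0) :=
    hF.fderiv_of_isOpen hU (by norm_num)
  have hDv (v : ℝ × ℝ) : ContDiffOn ℝ 1 (fun q => fderiv ℝ F q v) (univ ×ˢ Ioi 0) :=
    hD.clm_apply contDiffOn_const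
  have hDD : ContinuousOn (fderiv ℝ (fderiv ℝ F)) (univ ×ˢ Ioi 0) :=
    hD.continuousOn_fderiv_of_isOpen hU le_rfl
  have hmem {r s : ℝ} (hs : 0 < s) : ((r, s) : ℝ × ℝ) ∈ (univ : Set ℝ) ×ˢ Ioi (0 : ℝ) :=
    ⟨mem_univ _, hs⟩
  have hDat {r s : ℝ} (hs : 0 < s) :
      HasFDerivAt (fderiv ℝ F) (fderiv ℝ (fderiv ℝ F) (r, s)) (r, s) :=
    ((hD.differentiableOn one_ne_zero).differentiableAt (hU.mem_nhds (hmem hs))).hasFDerivAt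
  have hsym {r s : ℝ} (hs : 0 < s) (v w : ℝ × ℝ) :
      fderiv ℝ (fderiv ℝ F) (r, s) v w = fderiv ℝ (fderiv ℝ F) (r, s) w v :=
    (hF.contDiffAt (hU.mem_nhds (hmem hs))).isSymmSndFDerivAt (by simp) v w
  have hdr {r s : ℝ} (hs : 0 < s) (v : ℝ × ℝ) : HasDerivAt (fun r => fderiv ℝ F (r, s) v)
      (fderiv ℝ (fderiv ℝ F) (r, s) (1, 0) v) r := by
    have h1 : HasDerivAt (fun r : ℝ => (r, s)) ((1 : ℝ), (0 : ℝ)) r :=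
      (hasDerivAt_id r).prodMk (hasDerivAt_const r s)
    have h2 : HasDerivAt (fun r => fderiv ℝ F (r, s)) (fderiv ℝ (fderiv ℝ F) (r, s) (1, 0)) r :=
      HasFDerivAt.comp_hasDerivAt (f := fun r : ℝ => (r, s)) r (hDat hs) h1
    simpa only [map_zero, add_zero] using h2.clm_apply (hasDerivAt_const r v)
  have hdt {r s : ℝ} (hs : 0 < s) (v : ℝ × ℝ) : HasDerivAt (fun s => fderiv ℝ F (r, s) v)
      (fderiv ℝ (fderiv ℝ F) (r, s) (0, 1) v) s := by
    have h1 : HasDerivAt (fun s : ℝ => (r, s)) ((0 : ℝ), (1 : ℝ)) s :=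
      (hasDerivAt_const s r).prodMk (hasDerivAt_id s)
    have h2 : HasDerivAt (fun s => fderiv ℝ F (r, s)) (fderiv ℝ (fderiv ℝ F) (r, s) (0, 1)) s :=
      HasFDerivAt.comp_hasDerivAt (f := fun s : ℝ => (r, s)) s (hDat hs) h1
    simpa only [map_zero, add_zero] using h2.clm_apply (hasDerivAt_const s v)
  have hΦ1 : ContDiff ℝ 1 (deriv Φ) := by
    have : ContDiff ℝ (1 + 1) Φ := by simpa [one_add_one_eq_two] using hΦ
    exact (contDiff_succ_iff_deriv.1 this).2.2
  have hΦ' (c : ℝ) : HasDerivAt Φ (deriv Φ c) c :=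
    (hΦ.differentiable two_ne_zero c).hasDerivAt
  have hΦ'' (c : ℝ) : HasDerivAt (deriv Φ) (deriv (deriv Φ) c) c :=
    (hΦ1.differentiable one_ne_zero c).hasDerivAt
  have hline {s : ℝ} (hs : 0 < s) {E : Type} [TopologicalSpace E] {g : ℝ × ℝ → E}
      (hg : ContinuousOn g (univ ×ˢ Ioi 0)) : Continuous (fun r => g (r, s)) :=
    hg.comp_continuous (by fun_prop) fun r => hmem hs
  have hDDv (v w : ℝ × ℝ) :
      ContinuousOn (fun q => fderiv ℝ (fderiv ℝ F) q v w) (univ ×ˢ Ioi 0) :=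
    (hDD.clm_apply continuousOn_const).clm_apply continuousOn_const
  have hG' : ContinuousOn (fun q : ℝ × ℝ => deriv Φ (fderiv ℝ F q (1, 0)) *
      fderiv ℝ (fderiv ℝ F) q (0, 1) (1, 0)) (univ ×ˢ Ioi 0) :=
    (hΦ1.continuous.comp_continuousOn (hDv (1, 0)).continuousOn).mul (hDDv _ _)
  have hG : ContinuousOn (fun q : ℝ × ℝ => Φ (fderiv ℝ F q (1, 0))) (univ ×ˢ Ioi 0) :=
    hΦ.continuous.comp_continuousOn (hDv (1, 0)).continuousOn
  -- `[t/2, 2t]` is a compact neighbourhood of `t` inside `(0, ∞)`.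
  obtain ⟨C, hC⟩ := ((isCompact_Icc (a := (0 : ℝ)) (b := 1)).prod
    (isCompact_Icc (a := t / 2) (b := 2 * t))).exists_bound_of_continuousOn
    (hG'.mono (prod_mono (subset_univ _) fun s hs => lt_of_lt_of_le (by positivity) hs.1))
  have hmain := (intervalIntegral.hasDerivAt_integral_of_dominated_loc_of_deriv_le
    (μ := volume) (a := 0) (b := 1) (s := Icc (t / 2) (2 * t)) (x₀ := t) (bound := fun _ => C)
    (F := fun s r => Φ (fderiv ℝ F (r, s) (1, 0)))
    (F' := fun s r => deriv Φ (fderiv ℝ F (r, s) (1, 0)) *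
      fderiv ℝ (fderiv ℝ F) (r, s) (0, 1) (1, 0))
    (Icc_mem_nhds (by linarith) (by linarith))
    ((eventually_gt_nhds ht).mono fun s hs => (hline hs hG).aestronglyMeasurable)
    ((hline ht hG).intervalIntegrable _ _)
    (hline ht hG').aestronglyMeasurable
    (ae_of_all _ fun r hr s hs => hC (r, s)
      ⟨by rw [uIoc_of_le zero_le_one] at hr; exact Ioc_subset_Icc_self hr, hs⟩)
    (by simp)
    (ae_of_all _ fun r _ s hs =>
      (hΦ' _).comp s (hdt (lt_of_lt_of_le (by positivity) hs.1) (1, 0)))).2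
  refine hmain.congr_deriv ?_
  have hu (r : ℝ) : HasDerivAt (fun r => deriv Φ (fderiv ℝ F (r, t) (1, 0)))
      (deriv (deriv Φ) (fderiv ℝ F (r, t) (1, 0)) *
        fderiv ℝ (fderiv ℝ F) (r, t) (1, 0) (1, 0)) r :=
    (hΦ'' _).comp r (hdr ht (1, 0))
  have hbdry : fderiv ℝ F (1, t) = fderiv ℝ F (0, t) := by
    have h1 : (fun q : ℝ × ℝ => F (q + (1, 0))) = F := by
      funext q
      have h3 : q + ((1 : ℝ), (0 : ℝ)) = (q.1 + 1, q.2) := by ext <;> simp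
      rw [h3]
      exact hper q.1 q.2
    have h2 := fderiv_comp_add_right (𝕜 := ℝ) (f := F) (x := ((0 : ℝ), t)) ((1 : ℝ), (0 : ℝ))
    rw [h1] at h2
    simpa using h2.symm
  have hparts := intervalIntegral.integral_mul_deriv_eq_deriv_mul (a := 0) (b := 1)
    (fun r _ => hu r) (fun r _ => hdr ht (0, 1))
    (((hΦ1.continuous_deriv le_rfl).comp (hline ht (hDv (1, 0)).continuousOn)).mul
      (hline ht (hDDv _ _)) |>.intervalIntegrable _ _)
    ((hline ht (hDDv _ _)).intervalIntegrable _ _)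
  simp only [hsym ht (0, 1) (1, 0)]
  rw [hparts, hbdry]
  simp only [(hu _).deriv]
  ring

/-! ### Functions of the first coordinate -/

/-- The first-coordinate map pushes Lebesgue measure on the unit cube to Lebesgue measure on
`[0,1]`. -/
lemma setIntegral_unitCube (N : ℕ) [NeZero N] (h : ℝ → ℝ) (hh : Continuous h) :
    ∫ x in unitCube N, h (x 0) = ∫ r in (0 : ℝ)..1, h r := by
  have hp : IsProbabilityMeasure (volume.restrict (Icc (0 : ℝ) 1)) := ⟨by simp⟩
  have h1 := (PiLp.volume_preserving_ofLp (Fin N)).setIntegral_preimage_emb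
    (MeasurableEquiv.toLp 2 (Fin N → ℝ)).symm.measurableEmbedding
    (fun x => h (x 0)) (univ.pi fun _ => Icc (0 : ℝ) 1)
  have h2 : WithLp.ofLp ⁻¹' (univ.pi fun _ => Icc (0 : ℝ) 1) = unitCube N := by
    ext x
    simp only [unitCube, mem_preimage, mem_univ_pi, mem_ofPred_eq]
  rw [h2] at h1
  have h3 := measurePreserving_eval (fun _ : Fin N => volume.restrict (Icc (0 : ℝ) 1)) 0
  rw [h1, volume_pi, Measure.restrict_pi_pi, intervalIntegral.integral_of_le zero_le_one,
    ← integral_Icc_eq_integral_Ioc]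
  have h4 := integral_map (f := h)
    (μ := Measure.pi fun _ : Fin N => volume.restrict (Icc (0 : ℝ) 1)) h3.measurable.aemeasurable hh.aestronglyMeasurable
  rw [h3.map_eq] at h4
  exact h4.symm

/-- Coordinates of the gradient are partial derivatives; no differentiability is needed, both
sides being `0` where it fails. -/
lemma gradient_apply_coord (n : ℕ) (g : EuclideanSpace ℝ (Fin n) → ℝ)
    (z : EuclideanSpace ℝ (Fin n)) (i : Fin n) :
    gradient g z i = fderiv ℝ g z (EuclideanSpace.single i 1) := by
  rw [← InnerProductSpace.toDual_symm_apply (𝕜 := ℝ), EuclideanSpace.inner_single_right]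
  simp [gradient]

lemma fderiv_comp_coord {N : ℕ} [NeZero N] {G : ℝ → ℝ} {x : EuclideanSpace ℝ (Fin N)}
    (hG : DifferentiableAt ℝ G (x 0)) (i : Fin N) :
    fderiv ℝ (fun y : EuclideanSpace ℝ (Fin N) => G (y 0)) x (EuclideanSpace.single i 1)
      = if i = 0 then deriv G (x 0) else 0 := by
  have h := hG.hasDerivAt.comp_hasFDerivAt x
    (EuclideanSpace.proj (𝕜 := ℝ) (0 : Fin N)).hasFDerivAt
  have h' : HasFDerivAt (fun y : EuclideanSpace ℝ (Fin N) => G (y 0)) _ x := h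
  rw [h'.fderiv]
  by_cases hi : i = 0
  · simp [hi]
  · simp [hi, Ne.symm hi]

lemma gradient_comp_coord {N : ℕ} [NeZero N] {G : ℝ → ℝ} {x : EuclideanSpace ℝ (Fin N)}
    (hG : DifferentiableAt ℝ G (x 0)) :
    gradient (fun y : EuclideanSpace ℝ (Fin N) => G (y 0)) x
      = deriv G (x 0) • EuclideanSpace.single 0 1 := by
  ext i
  rw [gradient_apply_coord, fderiv_comp_coord hG]
  simp

/-! ### The energy density as a function of the slope -/

/-- The upward normal `(-c e₁, 1)` to the graph of a function of the first coordinate with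
slope `c`. -/
def normalVec (N : ℕ) [NeZero N] (c : ℝ) : EuclideanSpace ℝ (Fin (N + 1)) :=
  aug N (-(c • EuclideanSpace.single 0 1))

lemma normalVec_eq (N : ℕ) [NeZero N] (c : ℝ) :
    normalVec N c = EuclideanSpace.single (Fin.last N) 1
      - c • EuclideanSpace.single (Fin.castSucc 0) (1 : ℝ) := by
  ext i
  refine Fin.lastCases ?_ (fun i => ?_) i
  · have h : Fin.last N ≠ Fin.castSucc 0 := (Fin.castSucc_lt_last 0).ne'
    simp [normalVec, aug, -Fin.castSucc_zero', -Fin.castSucc_zero, h]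
  · simp [normalVec, aug, Pi.single_apply, (Fin.castSucc_lt_last i).ne]

lemma normalVec_ne_zero (N : ℕ) [NeZero N] (c : ℝ) : normalVec N c ≠ 0 := by
  intro h
  have := congrArg (fun v => v (Fin.last N)) h
  simp [normalVec, aug] at this

lemma hasDerivAt_normalVec (N : ℕ) [NeZero N] (c : ℝ) :
    HasDerivAt (normalVec N) (-EuclideanSpace.single (Fin.castSucc 0) (1 : ℝ)) c := by
  rw [funext (normalVec_eq N)]
  simpa using ((hasDerivAt_id c).smul_const
    (EuclideanSpace.single (Fin.castSucc (0 : Fin N)) (1 : ℝ))).const_sub _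

lemma contDiff_normalVec (N : ℕ) [NeZero N] : ContDiff ℝ 2 (normalVec N) := by
  rw [funext (normalVec_eq N)]
  fun_prop

/-- With `Φ c = φ (-c e₁, 1)`, the partial derivative `∂₁φ (-c e₁, 1)` is `-Φ' c`. -/
lemma deriv_comp_normalVec {N : ℕ} [NeZero N] {φ : EuclideanSpace ℝ (Fin (N + 1)) → ℝ}
    (hφ : ContDiffOn ℝ 2 φ {0}ᶜ) (c : ℝ) :
    gradient φ (normalVec N c) (Fin.castSucc 0) = -deriv (fun c => φ (normalVec N c)) c := by
  have h := ((hφ.contDiffAt (isOpen_compl_singleton.mem_nhds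
    (normalVec_ne_zero N c))).differentiableAt two_ne_zero).hasFDerivAt.comp_hasDerivAt c
    (hasDerivAt_normalVec N c)
  have h' : HasDerivAt (fun c => φ (normalVec N c)) _ c := h
  rw [h'.deriv, gradient_apply_coord]
  simp

/-- For a function of the first coordinate with slope `p`, the anisotropic mean curvature is
`-(Φ'(p))'`, where `Φ c = φ (-c e₁, 1)`: only the first term of the divergence survives. -/
lemma Aop_comp_coord {N : ℕ} [NeZero N] {φ : EuclideanSpace ℝ (Fin (N + 1)) → ℝ}
    (hφ : ContDiffOn ℝ 2 φ {0}ᶜ) {g p : ℝ → ℝ} (hg : ∀ r, HasDerivAt g (p r) r)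
    (hp : Differentiable ℝ p) (x : EuclideanSpace ℝ (Fin N)) :
    Aop N φ (fun y => g (y 0)) x
      = -deriv (fun r => deriv (fun c => φ (normalVec N c)) (p r)) (x 0) := by
  have hgrad (y : EuclideanSpace ℝ (Fin N)) :
      aug N (-(gradient (fun y : EuclideanSpace ℝ (Fin N) => g (y 0)) y))
        = normalVec N (p (y 0)) := by
    rw [gradient_comp_coord (hg _).differentiableAt, (hg _).deriv, normalVec]
  have hdiff (i : Fin N) : Differentiable ℝ
      fun r => gradient φ (normalVec N (p r)) (Fin.castSucc i) := by
    intro r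
    simp only [gradient_apply_coord]
    have h1 : DifferentiableAt ℝ (fderiv ℝ φ) (normalVec N (p r)) :=
      ((hφ.fderiv_of_isOpen (m := 1) isOpen_compl_singleton (by norm_num)).contDiffAt
        (isOpen_compl_singleton.mem_nhds (normalVec_ne_zero N _))).differentiableAt one_ne_zero
    have h2 : DifferentiableAt ℝ (fun r => normalVec N (p r)) r :=
      ((contDiff_normalVec N).differentiable two_ne_zero _).comp r (hp r)
    exact (DifferentiableAt.comp (g := fderiv ℝ φ) (f := fun r => normalVec N (p r)) r h1
      h2).clm_apply (differentiableAt_const _)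
  unfold Aop
  simp only [hgrad]
  simp only [fun i => fderiv_comp_coord (x := x) (hdiff i _) i]
  rw [Finset.sum_ite_eq' Finset.univ (0 : Fin N)]
  simp only [Finset.mem_univ, if_true, deriv_comp_normalVec hφ]
  simp

/-! ### Energy dissipation -/

/-- For a 1-dimensional periodic classical solution
`u(x,t) = f(x·e₁,t)` of the anisotropic graphical flow, the anisotropic area of the graph
over the unit cell dissipates:
`d/dt ∫_{[0,1]^N} φ(−∇u,1) dx = − ∫_{[0,1]^N} (∂ₜu)²/ψ(−∇u,1) dx`. -/
theorem anisotropic_energy_dissipation (N : ℕ) [NeZero N]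
    (φ ψ : EuclideanSpace ℝ (Fin (N + 1)) → ℝ)
    (hφ : IsSurfaceTension N φ)
    (hφC2 : ContDiffOn ℝ 2 φ {(0 : EuclideanSpace ℝ (Fin (N + 1)))}ᶜ)
    (hψcont : Continuous ψ) (hψpos : ∀ p, p ≠ 0 → 0 < ψ p)
    (f : ℝ → ℝ → ℝ)
    (hper : ∀ (r t : ℝ) (k : ℤ), f (r + k) t = f r t)
    (hC2 : ContDiffOn ℝ 2
      (fun q : (EuclideanSpace ℝ (Fin N)) × ℝ => f (q.1 0) q.2)
      (Set.univ ×ˢ Set.Ioi 0))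
    (hsol : IsFlowSol N φ ψ (fun x t => f (x 0) t) (Set.Ioi 0)) :
    ∀ t ∈ Set.Ioi (0 : ℝ),
      HasDerivAt
        (fun s => ∫ x in unitCube N,
          φ (aug N (-(gradient (fun y : EuclideanSpace ℝ (Fin N) => f (y 0) s) x))))
        (- ∫ x in unitCube N,
          (deriv (fun s => f (x 0) s) t) ^ 2
            / ψ (aug N (-(gradient (fun y : EuclideanSpace ℝ (Fin N) => f (y 0) t) x)))) t := by
  intro t ht
  have ht : 0 < t := ht
  set Φ : ℝ → ℝ := fun c => φ (normalVec N c) with hΦdef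
  have hΦ : ContDiff ℝ 2 Φ := by
    rw [← contDiffOn_univ]
    exact hφC2.comp (contDiff_normalVec N).contDiffOn fun c _ => normalVec_ne_zero N c
  set F : ℝ × ℝ → ℝ := fun q => f q.1 q.2 with hFdef
  have hF : ContDiffOn ℝ 2 F (univ ×ˢ Ioi 0) := by
    have h1 : ContDiff ℝ 2 (fun q : ℝ × ℝ =>
        ((q.1 • EuclideanSpace.single 0 1, q.2) : EuclideanSpace ℝ (Fin N) × ℝ)) := by
      fun_prop
    refine (hC2.comp h1.contDiffOn fun q hq => ⟨mem_univ _, hq.2⟩).congr fun q _ => ?_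
    simp [hFdef]
  have hU : IsOpen ((univ : Set ℝ) ×ˢ Ioi (0 : ℝ)) := isOpen_univ.prod isOpen_Ioi
  have hFat {r s : ℝ} (hs : 0 < s) : HasFDerivAt F (fderiv ℝ F (r, s)) (r, s) :=
    ((hF.differentiableOn two_ne_zero).differentiableAt
      (hU.mem_nhds (show (r, s) ∈ univ ×ˢ Ioi (0 : ℝ) from ⟨mem_univ r, hs⟩))).hasFDerivAt
  have hfr {s : ℝ} (hs : 0 < s) (r : ℝ) :
      HasDerivAt (fun r => f r s) (fderiv ℝ F (r, s) (1, 0)) r :=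
    HasFDerivAt.comp_hasDerivAt (f := fun r : ℝ => (r, s)) r (hFat hs)
      ((hasDerivAt_id r).prodMk (hasDerivAt_const r s))
  have hft {s : ℝ} (hs : 0 < s) (r : ℝ) :
      HasDerivAt (fun s => f r s) (fderiv ℝ F (r, s) (0, 1)) s :=
    HasFDerivAt.comp_hasDerivAt (f := fun s : ℝ => (r, s)) s (hFat hs)
      ((hasDerivAt_const s r).prodMk (hasDerivAt_id s))
  have hslope (v : ℝ × ℝ) {s : ℝ} (hs : 0 < s) :
      ContDiff ℝ 1 (fun r => fderiv ℝ F (r, s) v) := by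
    have hmaps : MapsTo (fun r : ℝ => (r, s)) univ (univ ×ˢ Ioi (0 : ℝ)) :=
      fun r _ => ⟨mem_univ r, hs⟩
    rw [← contDiffOn_univ]
    exact ((hF.fderiv_of_isOpen (m := 1) hU (by norm_num)).comp
      (by fun_prop) hmaps).clm_apply contDiffOn_const
  have hnormal {s : ℝ} (hs : 0 < s) (x : EuclideanSpace ℝ (Fin N)) :
      aug N (-(gradient (fun y : EuclideanSpace ℝ (Fin N) => f (y 0) s) x))
        = normalVec N (fderiv ℝ F (x 0, s) (1, 0)) := by
    rw [gradient_comp_coord (G := fun r => f r s) (hfr hs _).differentiableAt,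
      (hfr hs _).deriv, normalVec]
  have hψn (c : ℝ) : 0 < ψ (normalVec N c) := hψpos _ (normalVec_ne_zero N c)
  -- The flow equation, divided by `ψ > 0`.
  have hpde (r : ℝ) : deriv (fun r => deriv Φ (fderiv ℝ F (r, t) (1, 0))) r
      = fderiv ℝ F (r, t) (0, 1) / ψ (normalVec N (fderiv ℝ F (r, t) (1, 0))) := by
    have h := hsol.2.2 (r • EuclideanSpace.single 0 1) t ht
    rw [hnormal ht, Aop_comp_coord (g := fun r => f r t) hφC2 (hfr ht)
      ((hslope (1, 0) ht).differentiable one_ne_zero), (hft ht _).deriv] at h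
    simp only [PiLp.smul_apply, PiLp.single_apply, if_true, smul_eq_mul, mul_one] at h
    rw [eq_div_iff (hψn _).ne']
    linarith
  have henergy := hasDerivAt_energy F hF (fun r t => by simpa using hper r t 1) Φ hΦ t ht
  -- The two integrals reduce to one dimension; for the energy this is only claimed for `s > 0`.
  refine (henergy.congr_of_eventuallyEq ((eventually_gt_nhds ht).mono fun s hs => ?_)).congr_deriv
    ?_
  · simp only [hnormal hs]
    exact setIntegral_unitCube N (fun r => Φ (fderiv ℝ F (r, s) (1, 0)))
      (hΦ.continuous.comp (hslope (1, 0) hs).continuous)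
  · simp only [hnormal ht, fun r => (hft ht r).deriv]
    rw [setIntegral_unitCube N (fun r => fderiv ℝ F (r, t) (0, 1) ^ 2
      / ψ (normalVec N (fderiv ℝ F (r, t) (1, 0))))]
    · simp only [hpde]
      congr 2
      funext r
      ring
    · exact ((hslope (0, 1) ht).continuous.pow 2).div
        (hψcont.comp ((contDiff_normalVec N).continuous.comp (hslope (1, 0) ht).continuous))
        fun r => (hψn _).ne'

end
end

section
/- Let N ≥ 1 and let φ: ℝ^{N+1} → [0,∞) be a surface tension of class C² on ℝ^{N+1}\{0} such that φ² is uniformly convex. Let f: ℝ → ℝ be of class C², ℤ-periodic (f(r+k) = f(r) for all k ∈ ℤ) and odd (f(−r) = −f(r)). If the function u(x) := f(x·e₁) satisfies the anisotropic minimal surface equation A_φ[u](x) = div(∇_xφ(−∇u(x),1)) = 0 for all x ∈ ℝ^N, then f ≡ 0. -/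
/-!
Along the line `s ↦ (s e₁, 1)` the surface tension restricts to a one-variable function `g`, and
for `u(x) = f(x·e₁)` the operator collapses to `A_φ[u](x) = (g' ∘ (-f'))'(x·e₁)`
(`Aop_ridge`). Hence the minimal surface equation says that `g'(-f')` is constant.

Uniform convexity of `φ²` makes `φ` strictly subadditive on vectors which are not positive
multiples of each other (`surfaceTension_add_lt`): normalise both vectors to `φ = 1`, where strict
convexity of `φ²` applies. Two distinct points of the line `(s e₁, 1)` are never proportional, so
`g` is strictly convex (`strictConvexOn_line`) and `g'` is injective. Therefore `f'` is constant;
by Rolle's theorem and periodicity it vanishes somewhere, so `f` is constant, and an odd constant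
is zero.
-/


noncomputable section

open Set

/-- The line `s ↦ (s e₁, 1)` in `ℝ^{N+1}`; the direction `e₁` has index `0`. -/
def augLine (N : ℕ) [NeZero N] (s : ℝ) : EuclideanSpace ℝ (Fin (N + 1)) :=
  s • EuclideanSpace.single (Fin.castSucc (0 : Fin N)) 1 + EuclideanSpace.single (Fin.last N) 1

lemma augLine_zero_apply (N : ℕ) [NeZero N] (s : ℝ) :
    augLine N s (Fin.castSucc 0) = s := by
  simp [augLine, NeZero.ne N]

lemma augLine_last_apply (N : ℕ) [NeZero N] (s : ℝ) : augLine N s (Fin.last N) = 1 := by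
  simp [augLine, NeZero.ne N]

lemma augLine_ne_zero (N : ℕ) [NeZero N] (s : ℝ) : augLine N s ≠ 0 := by
  intro h
  have := augLine_last_apply N s
  simp [h] at this

lemma hasDerivAt_augLine (N : ℕ) [NeZero N] (s : ℝ) :
    HasDerivAt (augLine N) (EuclideanSpace.single (Fin.castSucc (0 : Fin N)) 1) s := by
  have h := ((hasDerivAt_id s).smul_const
    (EuclideanSpace.single (Fin.castSucc (0 : Fin N)) (1 : ℝ))).add_const
      (EuclideanSpace.single (Fin.last N) (1 : ℝ))
  rw [one_smul] at h
  exact h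

lemma aug_smul_single (N : ℕ) [NeZero N] (s : ℝ) :
    aug N (s • EuclideanSpace.single 0 1) = augLine N s := by
  ext j
  refine Fin.lastCases ?_ (fun i => ?_) j
  · rw [augLine_last_apply]
    simp [aug]
  · simp [aug, augLine, Pi.single_apply]

lemma gradient_ridge (N : ℕ) [NeZero N] {f : ℝ → ℝ} (hf : Differentiable ℝ f)
    (y : EuclideanSpace ℝ (Fin N)) :
    gradient (fun y : EuclideanSpace ℝ (Fin N) => f (y 0)) y
      = deriv f (y 0) • EuclideanSpace.single 0 1 := by
  apply HasGradientAt.gradient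
  rw [hasGradientAt_iff_hasFDerivAt]
  have h := (hf (y 0)).hasDerivAt.comp_hasFDerivAt y
    (EuclideanSpace.proj (𝕜 := ℝ) (0 : Fin N)).hasFDerivAt
  have hdual : InnerProductSpace.toDual ℝ (EuclideanSpace ℝ (Fin N))
      (deriv f (y 0) • EuclideanSpace.single 0 1)
      = deriv f (y 0) • EuclideanSpace.proj (𝕜 := ℝ) (0 : Fin N) := by
    ext v
    simp [EuclideanSpace.inner_single_left]
  rw [hdual]
  exact h

lemma gradient_apply_eq_fderiv {n : ℕ} (φ : EuclideanSpace ℝ (Fin n) → ℝ)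
    (p : EuclideanSpace ℝ (Fin n)) (j : Fin n) :
    gradient φ p j = fderiv ℝ φ p (EuclideanSpace.single j 1) := by
  have h : inner ℝ (gradient φ p) (EuclideanSpace.single j 1)
      = fderiv ℝ φ p (EuclideanSpace.single j 1) := by
    rw [gradient, InnerProductSpace.toDual_symm_apply]
  rw [← h, EuclideanSpace.inner_single_right]
  simp

/-- The directional derivatives of `φ` along the line are differentiable in the line parameter. -/
lemma differentiable_fderiv_augLine (N : ℕ) [NeZero N]
    {φ : EuclideanSpace ℝ (Fin (N + 1)) → ℝ} (hφC2 : ContDiffOn ℝ 2 φ {0}ᶜ)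
    (v : EuclideanSpace ℝ (Fin (N + 1))) :
    Differentiable ℝ (fun s => fderiv ℝ φ (augLine N s) v) := by
  intro s
  have hC : ContDiffAt ℝ 2 φ (augLine N s) :=
    hφC2.contDiffAt (isOpen_compl_singleton.mem_nhds (augLine_ne_zero N s))
  have h1 : DifferentiableAt ℝ (fderiv ℝ φ) (augLine N s) :=
    (hC.fderiv_right (m := 1) (by norm_num)).differentiableAt (by norm_num)
  exact (h1.comp s (hasDerivAt_augLine N s).differentiableAt).clm_apply
    (differentiableAt_const v)

/-- For a ridge function only the first summand of the divergence survives. -/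
lemma Aop_ridge (N : ℕ) [NeZero N]
    {φ : EuclideanSpace ℝ (Fin (N + 1)) → ℝ} (hφC2 : ContDiffOn ℝ 2 φ {0}ᶜ)
    {f : ℝ → ℝ} (hf : ContDiff ℝ 2 f) (x : EuclideanSpace ℝ (Fin N)) :
    Aop N φ (fun y => f (y 0)) x
      = deriv (fun r => fderiv ℝ φ (augLine N (-deriv f r))
          (EuclideanSpace.single (Fin.castSucc (0 : Fin N)) 1)) (x 0) := by
  have hf1 : Differentiable ℝ f := hf.differentiable (by norm_num)
  have hf2 : Differentiable ℝ (deriv f) :=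
    ((contDiff_succ_iff_deriv (n := 1)).1 hf).2.2.differentiable (by norm_num)
  have hterm : ∀ i : Fin N,
      fderiv ℝ (fun y : EuclideanSpace ℝ (Fin N) =>
        gradient φ (aug N (-(gradient (fun y : EuclideanSpace ℝ (Fin N) => f (y 0)) y)))
          (Fin.castSucc i)) x (EuclideanSpace.single i 1)
      = deriv (fun r => fderiv ℝ φ (augLine N (-deriv f r))
          (EuclideanSpace.single (Fin.castSucc i) 1)) (x 0)
          * (EuclideanSpace.single i (1 : ℝ) : EuclideanSpace ℝ (Fin N)) 0 := by
    intro i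
    set H : ℝ → ℝ := fun r => fderiv ℝ φ (augLine N (-deriv f r))
          (EuclideanSpace.single (Fin.castSucc i) 1) with hH
    have hHd : Differentiable ℝ H :=
      (differentiable_fderiv_augLine N hφC2 _).comp hf2.neg
    have hfun : (fun y : EuclideanSpace ℝ (Fin N) =>
        gradient φ (aug N (-(gradient (fun y : EuclideanSpace ℝ (Fin N) => f (y 0)) y)))
          (Fin.castSucc i)) = fun y => H (y 0) := by
      funext y
      rw [gradient_ridge N hf1, ← neg_smul, aug_smul_single, gradient_apply_eq_fderiv]
    have h := (hHd (x 0)).hasDerivAt.comp_hasFDerivAt x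
      (EuclideanSpace.proj (𝕜 := ℝ) (0 : Fin N)).hasFDerivAt
    have h' : HasFDerivAt (fun y : EuclideanSpace ℝ (Fin N) => H (y 0))
      (deriv H (x 0) • (EuclideanSpace.proj (𝕜 := ℝ) (0 : Fin N))) x := h
    rw [hfun, h'.fderiv]
    simp
  unfold Aop
  rw [Finset.sum_congr rfl (fun i _ => hterm i), Finset.sum_eq_single 0]
  · simp
  · intro i _ hi
    simp [hi.symm]
  · simp

/-- Strict subadditivity: equality in the triangle inequality for `φ` forces the two vectors to
have the same `φ`-normalisation. -/
lemma surfaceTension_add_lt {N : ℕ} {φ : EuclideanSpace ℝ (Fin (N + 1)) → ℝ}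
    (hφ : IsSurfaceTension N φ)
    (hsq : StrictConvexOn ℝ univ (fun p => (φ p) ^ 2))
    {p q : EuclideanSpace ℝ (Fin (N + 1))} (hp : p ≠ 0) (hq : q ≠ 0)
    (hpq : (φ p)⁻¹ • p ≠ (φ q)⁻¹ • q) : φ (p + q) < φ p + φ q := by
  obtain ⟨-, hnn, hhom, hpos⟩ := hφ
  have hP := hpos p hp
  have hQ := hpos q hq
  have hS : 0 < φ p + φ q := by positivity
  have h := hsq.2 (mem_univ ((φ p)⁻¹ • p)) (mem_univ ((φ q)⁻¹ • q)) hpq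
    (div_pos hP hS) (div_pos hQ hS) (by field_simp)
  -- The convex combination of the normalised vectors with these weights is a multiple of `p + q`.
  have hcomb : (φ p / (φ p + φ q)) • (φ p)⁻¹ • p + (φ q / (φ p + φ q)) • (φ q)⁻¹ • q
      = (φ p + φ q)⁻¹ • (p + q) := by
    rw [smul_smul, smul_smul, smul_add]
    congr 2 <;> field_simp
  simp only [hcomb, hhom _ (inv_pos.2 hP), hhom _ (inv_pos.2 hQ), hhom _ (inv_pos.2 hS),
    inv_mul_cancel₀ hP.ne', inv_mul_cancel₀ hQ.ne', smul_eq_mul, one_pow, mul_one] at h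
  rw [← add_div, div_self hS.ne'] at h
  have h1 : (φ p + φ q)⁻¹ * φ (p + q) < 1 := by
    by_contra hc
    exact absurd h (not_lt.2 (one_le_pow₀ (not_lt.1 hc)))
  rwa [inv_mul_lt_iff₀ hS, mul_one] at h1

lemma strictConvexOn_line {N : ℕ} [NeZero N] {φ : EuclideanSpace ℝ (Fin (N + 1)) → ℝ}
    (hφ : IsSurfaceTension N φ)
    (hsq : StrictConvexOn ℝ univ (fun p => (φ p) ^ 2)) :
    StrictConvexOn ℝ univ (fun s => φ (augLine N s)) := by
  refine ⟨convex_univ, fun s _ t _ hst a b ha hb hab => ?_⟩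
  have hne : ∀ {c : ℝ} (_ : 0 < c) (r : ℝ), c • augLine N r ≠ 0 := fun hc r =>
    smul_ne_zero hc.ne' (augLine_ne_zero N r)
  have hline : augLine N (a • s + b • t) = a • augLine N s + b • augLine N t := by
    obtain rfl : b = 1 - a := by linarith
    simp only [augLine, smul_eq_mul]
    module
  have h := surfaceTension_add_lt hφ hsq (hne ha s) (hne hb t) ?_
  · rw [hφ.2.2.1 a ha, hφ.2.2.1 b hb, ← hline] at h
    exact h
  · -- Comparing last coordinates shows that the two scaling factors agree.
    intro he
    rw [smul_smul, smul_smul] at he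
    have hl := congrArg (fun v : EuclideanSpace ℝ (Fin (N + 1)) => v (Fin.last N)) he
    have h0 := congrArg (fun v : EuclideanSpace ℝ (Fin (N + 1)) => v (Fin.castSucc 0)) he
    simp only [PiLp.smul_apply, augLine_last_apply, augLine_zero_apply, smul_eq_mul,
      mul_one] at hl h0
    rw [hl] at h0
    have hc : 0 < (φ (b • augLine N t))⁻¹ * b :=
      mul_pos (inv_pos.2 (hφ.2.2.2 _ (hne hb t))) hb
    exact hst (mul_left_cancel₀ hc.ne' h0)

/-- Let `φ` be a `C²` surface tension with `φ²` uniformly convex.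
If `f : ℝ → ℝ` is `C²`, `ℤ`-periodic and odd, and `u(x) = f(x·e₁)` solves the
anisotropic minimal surface equation `A_φ[u] = 0`, then `f ≡ 0`. -/
theorem periodic_odd_minimal_graph_is_zero (N : ℕ) [NeZero N]
    (φ : EuclideanSpace ℝ (Fin (N + 1)) → ℝ)
    (hφ : IsSurfaceTension N φ)
    (hφC2 : ContDiffOn ℝ 2 φ {(0 : EuclideanSpace ℝ (Fin (N + 1)))}ᶜ)
    (hunif : ∃ m > (0 : ℝ), StrongConvexOn Set.univ m (fun p => (φ p) ^ 2))
    (f : ℝ → ℝ) (hf : ContDiff ℝ 2 f)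
    (hper : ∀ (r : ℝ) (k : ℤ), f (r + k) = f r)
    (hodd : ∀ r : ℝ, f (-r) = -f r)
    (hmin : ∀ x : EuclideanSpace ℝ (Fin N), Aop N φ (fun y => f (y 0)) x = 0) :
    ∀ r : ℝ, f r = 0 := by
  obtain ⟨m, hm, hstrong⟩ := hunif
  have hg := strictConvexOn_line hφ (hstrong.strictConvexOn hm)
  have hf1 : Differentiable ℝ f := hf.differentiable (by norm_num)
  have hf2 : Differentiable ℝ (deriv f) :=
    ((contDiff_succ_iff_deriv (n := 1)).1 hf).2.2.differentiable (by norm_num)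
  set e : EuclideanSpace ℝ (Fin (N + 1)) :=
    EuclideanSpace.single (Fin.castSucc (0 : Fin N)) 1 with he
  have hgd : ∀ s, HasDerivAt (fun s => φ (augLine N s)) (fderiv ℝ φ (augLine N s) e) s := by
    intro s
    have hd : DifferentiableAt ℝ φ (augLine N s) :=
      (hφC2.contDiffAt (isOpen_compl_singleton.mem_nhds
        (augLine_ne_zero N s))).differentiableAt (by norm_num)
    exact hd.hasFDerivAt.comp_hasDerivAt s (hasDerivAt_augLine N s)
  have hmono : StrictMono (deriv fun s => φ (augLine N s)) := by
    rw [← strictMonoOn_univ]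
    exact hg.strictMonoOn_deriv (fun s _ => (hgd s).differentiableAt)
  have hconst : ∀ r t, deriv f r = deriv f t := by
    intro r t
    have h := is_const_of_deriv_eq_zero
      (f := fun r => fderiv ℝ φ (augLine N (-deriv f r)) e)
      ((differentiable_fderiv_augLine N hφC2 e).comp hf2.neg)
      (fun r => by
        have h0 := hmin (EuclideanSpace.single 0 r)
        rwa [Aop_ridge N hφC2 hf,
          show (EuclideanSpace.single (0 : Fin N) r : EuclideanSpace ℝ (Fin N)) 0 = r by simp]
          at h0) r t
    simp only [← (hgd _).deriv] at h
    exact neg_injective (hmono.injective h)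
  have h01 : f 0 = f 1 := by
    have := hper 0 1
    simpa using this.symm
  obtain ⟨c, -, hc⟩ := exists_deriv_eq_zero (zero_lt_one' ℝ) hf1.continuous.continuousOn h01
  intro r
  have hr := is_const_of_deriv_eq_zero hf1 (fun t => (hconst t c).trans hc) r 0
  have h0 := hodd 0
  rw [neg_zero] at h0
  linarith

end
end

section
/- Let N ≥ 1 and let φ: ℝ^{N+1} → [0,∞) be a surface tension of class C² on ℝ^{N+1}\{0}. Let ū: ℝ^N → ℝ be positively 1-homogeneous, of class C² on ℝ^N \ {0}, and satisfy A_φ[ū](x) < 0 for all x ≠ 0. Let χ: [0,∞) → [0,1] be smooth with χ ≡ 1 on [0,1] and χ ≡ 0 on [2,∞). Then there exists r₀ > 0 such that for all r ∈ (0, r₀) the function b_r(x) := ū(x) − r·χ(|x|) satisfies A_φ[b_r](x) < 0 for all x ∈ ℝ^N \ {0}. -/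
/-! Where `|x| < 1` or `|x| > 2` the perturbation `b_r` differs locally from `ū` by a constant, so
its gradient, and hence `A_φ[b_r]`, is that of `ū` (`Aop_eq_of_eventuallyEq_sub_const`). On the
compact annulus `1 ≤ |x| ≤ 2` everything is `C²` and `(−∇b_r, 1) ≠ 0`, so `(r, x) ↦ A_φ[b_r](x)` is
jointly continuous (`continuousAt_Aop_perturb`); it is negative on `{0} × annulus`, and by
compactness it stays negative there for all small `r`. -/

noncomputable section

lemma aug_last (N : ℕ) (p : EuclideanSpace ℝ (Fin N)) : aug N p (Fin.last N) = 1 := by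
  simp [aug]

lemma aug_ne_zero (N : ℕ) (p : EuclideanSpace ℝ (Fin N)) : aug N p ≠ 0 := by
  intro h
  have h1 := aug_last N p
  rw [h] at h1
  simp at h1

lemma contDiff_aug (N : ℕ) : ContDiff ℝ 1 (aug N) := by
  rw [contDiff_euclidean]
  intro i
  refine Fin.lastCases ?_ (fun j => ?_) i
  · simp only [aug_last]
    exact contDiff_const
  · have h : (fun p : EuclideanSpace ℝ (Fin N) => aug N p j.castSucc) = fun p => p j := by
      funext p
      simp [aug]
    rw [h]
    exact contDiff_euclidean.1 contDiff_id j

lemma contDiffAt_gradient {n : ℕ} {f : EuclideanSpace ℝ (Fin n) → ℝ}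
    {x : EuclideanSpace ℝ (Fin n)} (h : ContDiffAt ℝ 2 f x) :
    ContDiffAt ℝ 1 (gradient f) x := by
  have h1 : ContDiffAt ℝ 1 (fderiv ℝ f) x := h.fderiv_right (by norm_num)
  exact (InnerProductSpace.toDual ℝ (EuclideanSpace ℝ (Fin n))).symm.contDiff.contDiffAt.comp x h1

/-- `A_φ[u](x)` depends only on the germ of `u` at `x`, up to an additive constant. -/
lemma Aop_eq_of_eventuallyEq_sub_const (N : ℕ) (φ : EuclideanSpace ℝ (Fin (N + 1)) → ℝ)
    {u v : EuclideanSpace ℝ (Fin N) → ℝ} {x : EuclideanSpace ℝ (Fin N)} (c : ℝ)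
    (h : ∀ᶠ y in nhds x, v y = u y - c) : Aop N φ v x = Aop N φ u x := by
  have hg : ∀ᶠ y in nhds x, gradient v y = gradient u y := by
    filter_upwards [h.eventually_nhds] with y hy
    have h1 : fderiv ℝ v y = fderiv ℝ (fun z => u z - c) y := Filter.EventuallyEq.fderiv_eq hy
    rw [fderiv_sub_const] at h1
    simp only [gradient, h1]
  unfold Aop
  refine Finset.sum_congr rfl fun i _ => ?_
  congr 1
  apply Filter.EventuallyEq.fderiv_eq
  filter_upwards [hg] with y hy
  rw [hy]

lemma gradient_sub_const_mul {n : ℕ} {u η : EuclideanSpace ℝ (Fin n) → ℝ}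
    {x : EuclideanSpace ℝ (Fin n)} (hu : ContDiffAt ℝ 2 u x) (hη : ContDiffAt ℝ 2 η x) (r : ℝ) :
    gradient (fun y => u y - r * η y) x = gradient u x - r • gradient η x := by
  have hu' := hu.differentiableAt (by norm_num)
  have hη' := hη.differentiableAt (by norm_num)
  have h : fderiv ℝ (fun y => u y - r * η y) x = fderiv ℝ u x - r • fderiv ℝ η x :=
    (hu'.hasFDerivAt.sub (hη'.hasFDerivAt.const_mul r)).fderiv
  simp [gradient, h]

/-- Freezing `r` in the jointly `C¹` field `∇ₓφ(-(∇u - r∇η), 1)` turns `A_φ[u - rη](x)` into a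
partial divergence of this field, which is continuous in `(r, x)`. -/
lemma continuousAt_Aop_perturb (N : ℕ) (φ : EuclideanSpace ℝ (Fin (N + 1)) → ℝ)
    (hφ : ∀ p, p ≠ 0 → ContDiffAt ℝ 2 φ p) (u η : EuclideanSpace ℝ (Fin N) → ℝ)
    (hu : ∀ x, x ≠ 0 → ContDiffAt ℝ 2 u x) (hη : ∀ x, x ≠ 0 → ContDiffAt ℝ 2 η x)
    (r : ℝ) (x : EuclideanSpace ℝ (Fin N)) (hx : x ≠ 0) :
    ContinuousAt (fun p : ℝ × EuclideanSpace ℝ (Fin N) =>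
      Aop N φ (fun y => u y - p.1 * η y) p.2) (r, x) := by
  set H : Fin N → ℝ × EuclideanSpace ℝ (Fin N) → ℝ := fun i p =>
    gradient φ (aug N (-(gradient u p.2 - p.1 • gradient η p.2))) (Fin.castSucc i) with hH
  have hC : ∀ i, ∀ p : ℝ × EuclideanSpace ℝ (Fin N), p.2 ≠ 0 → ContDiffAt ℝ 1 (H i) p := by
    intro i p hp
    have h1 : ContDiffAt ℝ 1 (fun p : ℝ × EuclideanSpace ℝ (Fin N) => gradient u p.2) p :=
      (contDiffAt_gradient (hu _ hp)).comp p contDiffAt_snd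
    have h2 : ContDiffAt ℝ 1 (fun p : ℝ × EuclideanSpace ℝ (Fin N) => gradient η p.2) p :=
      (contDiffAt_gradient (hη _ hp)).comp p contDiffAt_snd
    have h3 : ContDiffAt ℝ 1 (fun p : ℝ × EuclideanSpace ℝ (Fin N) =>
        aug N (-(gradient u p.2 - p.1 • gradient η p.2))) p :=
      (contDiff_aug N).contDiffAt.comp p ((h1.sub (contDiffAt_fst.smul h2)).neg)
    have h4 : ContDiffAt ℝ 1 (fun p : ℝ × EuclideanSpace ℝ (Fin N) =>
        gradient φ (aug N (-(gradient u p.2 - p.1 • gradient η p.2)))) p :=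
      ContDiffAt.comp (g := gradient φ) p (contDiffAt_gradient (hφ _ (aug_ne_zero _ _))) h3
    exact contDiffAt_euclidean.1 h4 _
  have hev : ∀ᶠ p : ℝ × EuclideanSpace ℝ (Fin N) in nhds (r, x), p.2 ≠ 0 :=
    continuousAt_snd.eventually_ne hx
  have hEq : (fun p : ℝ × EuclideanSpace ℝ (Fin N) => Aop N φ (fun y => u y - p.1 * η y) p.2)
      =ᶠ[nhds (r, x)] fun p => ∑ i, fderiv ℝ (H i) p (0, EuclideanSpace.single i 1) := by
    filter_upwards [hev] with p hp
    unfold Aop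
    refine Finset.sum_congr rfl fun i _ => ?_
    have hloc : (fun y : EuclideanSpace ℝ (Fin N) =>
        gradient φ (aug N (-(gradient (fun y => u y - p.1 * η y) y))) (Fin.castSucc i))
        =ᶠ[nhds p.2] fun y => H i (p.1, y) := by
      filter_upwards [eventually_ne_nhds hp] with y hy
      rw [gradient_sub_const_mul (hu y hy) (hη y hy)]
    have hd : HasFDerivAt (fun y => H i (p.1, y))
        ((fderiv ℝ (H i) p).comp (ContinuousLinearMap.inr ℝ ℝ (EuclideanSpace ℝ (Fin N)))) p.2 :=
      HasFDerivAt.comp (g := H i) p.2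
        (((hC i p hp).differentiableAt (by norm_num)).hasFDerivAt)
        (hasFDerivAt_prodMk_right p.1 p.2)
    rw [hloc.fderiv_eq, hd.fderiv]
    simp
  refine ContinuousAt.congr ?_ hEq.symm
  refine tendsto_finsetSum _ fun i _ => ?_
  exact (((hC i (r, x) hx).fderiv_right (m := 0) (by norm_num)).continuousAt).clm_apply
    continuousAt_const

/-- Let `ū` be a positively 1-homogeneous function, `C²` away from the
origin, with `A_φ[ū] < 0` off the origin, and let `χ` be a smooth cutoff with values in
`[0,1]`, `χ ≡ 1` on `[0,1]` and `χ ≡ 0` on `[2,∞)`. Then for all sufficiently small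
`r > 0` the perturbation `b_r(x) = ū(x) − r·χ(|x|)` still satisfies `A_φ[b_r] < 0`
away from the origin. -/
theorem strictly_meanconvex_cone_barrier (N : ℕ) (hN : 1 ≤ N)
    (φ : EuclideanSpace ℝ (Fin (N + 1)) → ℝ)
    (hφ : IsSurfaceTension N φ)
    (hφC2 : ContDiffOn ℝ 2 φ {(0 : EuclideanSpace ℝ (Fin (N + 1)))}ᶜ)
    (ubar : EuclideanSpace ℝ (Fin N) → ℝ)
    (hhom : ∀ s : ℝ, 0 < s → ∀ x, ubar (s • x) = s * ubar x)
    (hC2 : ContDiffOn ℝ 2 ubar {(0 : EuclideanSpace ℝ (Fin N))}ᶜ)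
    (hmc : ∀ x : EuclideanSpace ℝ (Fin N), x ≠ 0 → Aop N φ ubar x < 0)
    (χ : ℝ → ℝ) (hχ : ContDiff ℝ (⊤ : ℕ∞) χ)
    (hχ01 : ∀ s : ℝ, χ s ∈ Set.Icc (0 : ℝ) 1)
    (hχ1 : ∀ s ≤ (1 : ℝ), χ s = 1)
    (hχ0 : ∀ s ≥ (2 : ℝ), χ s = 0) :
    ∃ r₀ > (0 : ℝ), ∀ r ∈ Set.Ioo (0 : ℝ) r₀,
      ∀ x : EuclideanSpace ℝ (Fin N), x ≠ 0 →
        Aop N φ (fun y => ubar y - r * χ ‖y‖) x < 0 := by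
  have hφ' : ∀ p, p ≠ 0 → ContDiffAt ℝ 2 φ p := fun p hp =>
    hφC2.contDiffAt (isOpen_compl_singleton.mem_nhds hp)
  have hu : ∀ x, x ≠ 0 → ContDiffAt ℝ 2 ubar x := fun p hp =>
    hC2.contDiffAt (isOpen_compl_singleton.mem_nhds hp)
  have hη : ∀ x : EuclideanSpace ℝ (Fin N), x ≠ 0 → ContDiffAt ℝ 2 (fun y => χ ‖y‖) x :=
    fun x hx => (contDiff_infty.1 hχ 2).contDiffAt.comp x (contDiffAt_norm ℝ hx)
  have hK : IsCompact (Metric.closedBall (0 : EuclideanSpace ℝ (Fin N)) 2 ∩ {x | 1 ≤ ‖x‖}) :=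
    (isCompact_closedBall _ _).inter_right (isClosed_le continuous_const continuous_norm)
  have key : ∀ᶠ r in nhds (0 : ℝ),
      ∀ x ∈ Metric.closedBall (0 : EuclideanSpace ℝ (Fin N)) 2 ∩ {x | 1 ≤ ‖x‖},
        Aop N φ (fun y => ubar y - r * χ ‖y‖) x < 0 := by
    refine hK.eventually_forall_of_forall_eventually fun x hx => ?_
    have hx0 : x ≠ 0 := norm_pos_iff.1 (one_pos.trans_le hx.2)
    refine (continuousAt_Aop_perturb N φ hφ' ubar (fun y => χ ‖y‖) hu hη 0 x hx0).eventually_lt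
      continuousAt_const ?_
    simpa using hmc x hx0
  obtain ⟨r₀, hr₀, hball⟩ := Metric.eventually_nhds_iff.1 key
  refine ⟨r₀, hr₀, fun r hr x hx => ?_⟩
  rcases lt_or_ge ‖x‖ 1 with h1 | h1
  · rw [Aop_eq_of_eventuallyEq_sub_const N φ (u := ubar) r]
    · exact hmc x hx
    · filter_upwards [continuous_norm.continuousAt.eventually_lt continuousAt_const h1] with y hy
      rw [hχ1 _ hy.le, mul_one]
  rcases lt_or_ge 2 ‖x‖ with h2 | h2
  · rw [Aop_eq_of_eventuallyEq_sub_const N φ (u := ubar) 0]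
    · exact hmc x hx
    · filter_upwards [continuousAt_const.eventually_lt continuous_norm.continuousAt h2] with y hy
      rw [hχ0 _ hy.le, mul_zero]
  · refine hball ?_ x ⟨by simpa using h2, h1⟩
    rw [Real.dist_eq, sub_zero, abs_of_pos hr.1]
    exact hr.2

end
end
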